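/- For every n ≡ 3, 4, 5, 6, or 7 (mod 8) and every c ∈ ℚ₂, the discriminant disc(H_n + c·H_{n−1}) of the quasi-Hermite polynomial is not a square in ℚ₂. -/

import Mathlib

open Polynomial

/-- The resultant over an algebraically closed field:
`Res f g = lc(f)^(deg g) * ∏_{α root of f} g(α)`. -/
noncomputable def Res {K : Type*} [Field K] (f g : Polynomial K) : K :=
  f.leadingCoeff ^ g.natDegree * (f.roots.map (fun a => g.eval a)).prod

/-- The discriminant of a polynomial over an algebraically closed field. -/
noncomputable def disc {K : Type*} [Field K] (f : Polynomial K) : K :=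
  (-1) ^ (f.natDegree * (f.natDegree - 1) / 2) / f.leadingCoeff * Res f (derivative f)

/-- The physicists' Hermite polynomials, with coefficients in `ℚ_[2]`. -/
noncomputable def H : ℕ → Polynomial ℚ_[2]
  | 0 => 1
  | 1 => 2 * X
  | (n + 2) => 2 * X * H (n + 1) - C (2 * (n + 1 : ℚ_[2])) * H n

local notation "K" => AlgebraicClosure ℚ_[2]

/-!
Put `f = H_n + c H_{n-1}` and `w = c² / 2`. Since `f ≡ H_n` modulo `H_{n-1}` and
`f' + c f = H_{n-1} (2n + c² + 2cX)`, the discriminant of `f` is the resultant of `H_n` and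
`H_{n-1}`, which is `± ∏_{k<n} (8k)^k`, times the value of `f` at the root of a linear polynomial.
After clearing signs and denominators, `disc f = (∏_{k<n} (8k)^k) T_n(w)` with `T_n` a polynomial.

The square class of the product is that of `2^⌊n/2⌋ (2⌊n/2⌋ - 1)‼`, and the double factorial is
determined modulo `8` by `⌊n/2⌋` modulo `4`. That of `T_n(w)` depends on the size of `c`.
* If `c = 1 / d` with `d` integral, reverse `T_n`: the new variable is `2d²`, whose square and
  double vanish modulo `4`, so only the constant and linear coefficients matter.
* If `c = 2nb` with `b` integral, rescaling `w = n² z` makes `T_n(w) / n^n` an integral polynomial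
  in `z = 2b²`, and again only its constant and linear terms matter modulo `4`.
* For odd `n` there are no other `c`. For `n ≡ 4, 6` modulo `8` there remain the `c` with
  `1 ≤ v₂(c) ≤ v₂(n)`. Then `(n + w)² = x w` with `x` integral, and `T_n(w)` is a power of `-w`
  times a combination of generalised Laguerre polynomials at `x`; modulo `8`, these have period `4`
  in the index, and `x` is `2` or `0`.
-/

section GeneralPolynomials

theorem resultant_mul_right_of_natDegree_le {R : Type*} [CommRing R] {f g₁ g₂ : R[X]}
    {m n₁ n₂ : ℕ} (hf : f.natDegree ≤ m) (h₁ : g₁.natDegree ≤ n₁) (h₂ : g₂.natDegree ≤ n₂) :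
    resultant f (g₁ * g₂) m (n₁ + n₂) = resultant f g₁ m n₁ * resultant f g₂ m n₂ := by
  obtain ⟨k₁, rfl⟩ := Nat.exists_eq_add_of_le h₁
  obtain ⟨k₂, rfl⟩ := Nat.exists_eq_add_of_le h₂
  rw [add_add_add_comm, resultant_add_right_deg _ _ _ _ _ natDegree_mul_le,
    resultant_mul_right _ _ _ _ hf, resultant_add_right_deg _ _ _ _ _ le_rfl,
    resultant_add_right_deg _ _ _ _ _ le_rfl]
  ring

theorem disc_map_eq_map_discr {F L : Type*} [Field F] [CharZero F] [Field L] [IsAlgClosed L]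
    (φ : F →+* L) {f : F[X]} (hf : 0 < f.natDegree) : disc (f.map φ) = φ f.discr := by
  have hlc : f.leadingCoeff ≠ 0 := leadingCoeff_ne_zero.2 (ne_zero_of_natDegree_gt hf)
  have hRes : Res (f.map φ) (derivative (f.map φ)) =
      φ (resultant f (derivative f) f.natDegree (f.natDegree - 1)) := by
    rw [Res, ← resultant_eq_prod_eval _ _ _ le_rfl (IsAlgClosed.splits _), derivative_map,
      natDegree_map, natDegree_map, natDegree_derivative, resultant_map_map]
  have hsign (s : ℕ) : (-1 : L) ^ s * (-1) ^ s = 1 := by rw [← mul_pow]; simp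
  rw [disc, hRes, resultant_deriv (natDegree_pos_iff_degree_pos.1 hf), natDegree_map,
    leadingCoeff_map]
  simp only [map_mul, map_pow, map_neg, map_one]
  field_simp [(map_ne_zero φ).2 hlc]
  linear_combination φ f.discr * hsign (f.natDegree * (f.natDegree - 1) / 2)

end GeneralPolynomials

section Hermite

theorem H_add_two (n : ℕ) : H (n + 2) = 2 * X * H (n + 1) - C (2 * (n + 1 : ℚ_[2])) * H n := by
  rw [H]

theorem natDegree_H_le (n : ℕ) : (H n).natDegree ≤ n := by
  induction n using Nat.twoStepInduction with
  | zero => simp [H]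
  | one => rw [H]; compute_degree
  | more n ih₀ ih₁ => rw [H_add_two]; compute_degree!; omega

theorem coeff_H_self (n : ℕ) : (H n).coeff n = 2 ^ n := by
  induction n using Nat.twoStepInduction with
  | zero => simp [H]
  | one => simp [H, coeff_ofNat_mul]
  | more n _ ih =>
    rw [H_add_two, coeff_sub, coeff_C_mul, mul_assoc, coeff_ofNat_mul, coeff_X_mul, ih,
      coeff_eq_zero_of_natDegree_lt ((natDegree_H_le n).trans_lt (by omega))]
    ring

theorem derivative_H_succ (n : ℕ) :
    derivative (H (n + 1)) = C (2 * (n + 1 : ℚ_[2])) * H n := by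
  induction n using Nat.strong_induction_on with
  | _ n ih =>
    match n with
    | 0 => simp [H, C_ofNat]
    | 1 =>
      rw [H_add_two, derivative_sub, derivative_mul, derivative_C_mul, ih 0 one_pos]
      simp only [derivative_mul, derivative_ofNat, zero_mul, derivative_X, mul_one, zero_add, H,
        CharP.cast_eq_zero, C_ofNat, derivative_one, mul_zero, sub_zero, Nat.cast_one, map_mul,
        map_add, map_one]
      ring
    | n + 2 =>
      have h2X : derivative (2 * X : ℚ_[2][X]) = 2 := by simp
      rw [H_add_two (n + 1), derivative_sub, derivative_mul, derivative_C_mul,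
        ih (n + 1) (by omega), ih n (by omega), H_add_two n, h2X]
      simp only [Nat.cast_add, map_mul, map_add, map_natCast, map_one, C_ofNat, Nat.cast_ofNat,
        Nat.cast_one]
      ring

theorem H_succ (n : ℕ) : H (n + 1) = 2 * X * H n - derivative (H n) := by
  cases n with
  | zero => simp [H]
  | succ n => rw [H_add_two, derivative_H_succ]

theorem natDegree_quasiHermite_le (n : ℕ) (c : ℚ_[2]) :
    (H (n + 1) + C c * H n).natDegree ≤ n + 1 := by
  have h₁ := natDegree_H_le (n + 1)
  have h₀ := natDegree_H_le n
  compute_degree!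
  omega

theorem coeff_quasiHermite_self (n : ℕ) (c : ℚ_[2]) :
    (H (n + 1) + C c * H n).coeff (n + 1) = 2 ^ (n + 1) := by
  rw [coeff_add, coeff_C_mul, coeff_H_self,
    coeff_eq_zero_of_natDegree_lt (Nat.lt_succ_of_le (natDegree_H_le n)), mul_zero, add_zero]

theorem natDegree_quasiHermite (n : ℕ) (c : ℚ_[2]) :
    (H (n + 1) + C c * H n).natDegree = n + 1 :=
  natDegree_eq_of_le_of_coeff_ne_zero (natDegree_quasiHermite_le n c)
    (by rw [coeff_quasiHermite_self]; exact pow_ne_zero _ two_ne_zero)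

theorem derivative_quasiHermite (n : ℕ) (c : ℚ_[2]) :
    derivative (H (n + 1) + C c * H n) + (H (n + 1) + C c * H n) * C c =
      H n * (C (2 * (n + 1) + c ^ 2) + C (2 * c) * X) := by
  rw [derivative_add, derivative_C_mul, derivative_H_succ, H_succ]
  simp only [map_mul, map_add, map_natCast, map_one, map_ofNat, map_pow]
  ring

/-- The absolute value `∏_{k<n} (8k)^k` of the resultant of `H n` and `H (n - 1)`. -/
def hermiteRes (n : ℕ) : ℕ := ∏ k ∈ Finset.range n, (8 * k) ^ k

theorem hermiteRes_succ (n : ℕ) : hermiteRes (n + 1) = hermiteRes n * (8 * n) ^ n :=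
  Finset.prod_range_succ _ _

theorem resultant_H_add_two (n : ℕ) :
    resultant (H (n + 2)) (H (n + 1)) (n + 2) (n + 1) =
      (-(8 * (n + 1 : ℚ_[2]))) ^ (n + 1) * resultant (H (n + 1)) (H n) (n + 1) n := by
  have hX : (C (2 : ℚ_[2]) * X).natDegree + (n + 1) ≤ n + 2 := by
    have := natDegree_C_mul_le (2 : ℚ_[2]) X
    rw [natDegree_X] at this
    omega
  have hrec : H (n + 2) = C (-(2 * (n + 1 : ℚ_[2]))) * H n + H (n + 1) * (C 2 * X) := by
    rw [H_add_two, map_neg, C_ofNat]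
    ring
  calc resultant (H (n + 2)) (H (n + 1)) (n + 2) (n + 1)
      = resultant (C (-(2 * (n + 1 : ℚ_[2]))) * H n + H (n + 1) * (C 2 * X)) (H (n + 1))
          (n + 2) (n + 1) := by rw [hrec]
    _ = (-(2 * (n + 1 : ℚ_[2]))) ^ (n + 1) * resultant (H n) (H (n + 1)) (n + 2) (n + 1) := by
        rw [resultant_add_mul_left _ _ _ _ _ hX (natDegree_H_le _), resultant_C_mul_left]
    _ = (-(2 * (n + 1 : ℚ_[2]))) ^ (n + 1) *
          ((2 ^ (n + 1)) ^ 2 * resultant (H (n + 1)) (H n) (n + 1) n) := by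
        rw [resultant_add_left_deg _ _ _ _ _ (natDegree_H_le n), resultant_comm (H n),
          coeff_H_self, mul_comm (n + 1) 2, pow_mul (-1), neg_one_sq, one_pow,
          (Nat.even_mul_succ_self n).neg_one_pow, one_mul, one_mul]
    _ = _ := by
        rw [← pow_mul, mul_comm (n + 1) 2, pow_mul, ← mul_assoc, ← mul_pow]
        ring_nf

theorem resultant_H_succ (n : ℕ) :
    resultant (H (n + 1)) (H n) (n + 1) n =
      (-1) ^ ((n + 1) * n / 2) * (hermiteRes (n + 1) : ℚ_[2]) := by
  induction n with
  | zero => simp [H, hermiteRes]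
  | succ n ih =>
    have hexp : (n + 1 + 1) * (n + 1) / 2 = (n + 1) * n / 2 + (n + 1) := by
      rw [← Nat.add_mul_div_right _ _ two_pos]; ring_nf
    rw [resultant_H_add_two, ih, hexp, hermiteRes_succ (n + 1), neg_pow, pow_add]
    push_cast
    ring

end Hermite

section VarHermite

variable {R S : Type*} [CommRing R] [CommRing S]

/-- The Hermite polynomial `He_m^{[w]}(v)` of variance `w`: the two-variable homogeneous form
(`v` of weight one, `w` of weight two) of the monic Hermite polynomials. -/
def varHermite (v w : R) : ℕ → R
  | 0 => 1
  | 1 => v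
  | m + 2 => v * varHermite v w (m + 1) - (m + 1) * w * varHermite v w m

theorem varHermite_add_two (v w : R) (m : ℕ) : varHermite v w (m + 2) =
    v * varHermite v w (m + 1) - (m + 1) * w * varHermite v w m := by
  rw [varHermite]

theorem map_varHermite (φ : R →+* S) (v w : R) (m : ℕ) :
    φ (varHermite v w m) = varHermite (φ v) (φ w) m := by
  induction m using Nat.twoStepInduction with
  | zero => simp [varHermite]
  | one => simp [varHermite]
  | more m ih₀ ih₁ => simp [varHermite_add_two, ih₀, ih₁]

theorem varHermite_mul_sq_mul (r v w : R) (m : ℕ) :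
    varHermite (r * v) (r ^ 2 * w) m = r ^ m * varHermite v w m := by
  induction m using Nat.twoStepInduction with
  | zero => simp [varHermite]
  | one => simp [varHermite]
  | more m ih₀ ih₁ => rw [varHermite_add_two, varHermite_add_two, ih₀, ih₁]; ring

theorem varHermite_zero_right (v : R) (m : ℕ) : varHermite v 0 m = v ^ m := by
  induction m using Nat.twoStepInduction with
  | zero => simp [varHermite]
  | one => simp [varHermite]
  | more m _ ih => rw [varHermite_add_two, ih]; ring

theorem eval_H_eq_varHermite {c w : ℚ_[2]} (v : ℚ_[2]) (hc : c ≠ 0) (hw : c ^ 2 = 2 * w) (m : ℕ) :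
    (-c) ^ m * (H m).eval (-(v / c)) = 2 ^ m * varHermite v w m := by
  induction m using Nat.twoStepInduction with
  | zero => simp [H, varHermite]
  | one =>
    simp only [pow_one, H, eval_mul, eval_ofNat, eval_X, mul_neg, neg_mul, neg_neg, varHermite]
    field_simp
  | more m ih₀ ih₁ =>
    have hvc : c * (v / c) = v := by field_simp
    rw [H_add_two, varHermite_add_two]
    simp only [eval_sub, eval_mul, eval_C, eval_X, eval_ofNat]
    linear_combination 2 * v * ih₁ - 4 * (m + 1) * w * ih₀
      + 2 * (-c) ^ (m + 1) * (H (m + 1)).eval (-(v / c)) * hvc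
      - 2 * (m + 1) * (-c) ^ m * (H m).eval (-(v / c)) * hw

/-- The factor of the discriminant of `H n + c H (n - 1)` that depends on `c`, as a function of
`w = c ^ 2 / 2`. It is meant for `1 ≤ n`. -/
def discFactor (n : ℕ) (w : R) : R :=
  varHermite (n + w) w n - w * varHermite (n + w) w (n - 1)

theorem discFactor_succ (n : ℕ) (w : R) : discFactor (n + 1) w =
    varHermite (n + 1 + w) w (n + 1) - w * varHermite (n + 1 + w) w n := by
  simp [discFactor]

theorem resultant_quasiHermite_linear (n : ℕ) {c w : ℚ_[2]} (hw : c ^ 2 = 2 * w) :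
    resultant (H (n + 1) + C c * H n) (C (2 * (n + 1) + c ^ 2) + C (2 * c) * X) (n + 1) 1 =
      4 ^ (n + 1) * discFactor (n + 1) w := by
  rcases eq_or_ne c 0 with rfl | hc
  · obtain rfl : w = 0 := by simpa using hw
    have hlin : C (2 * (n + 1 : ℚ_[2]) + 0 ^ 2) + C (2 * 0) * X = C (2 * (n + 1 : ℚ_[2])) := by
      simp
    rw [hlin, resultant_C_right, coeff_quasiHermite_self, discFactor_succ, varHermite_zero_right,
      pow_one, zero_mul, sub_zero, add_zero, mul_pow, ← mul_assoc, ← mul_pow]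
    norm_num
  · set v : ℚ_[2] := n + 1 + w with hv
    have hlin : C (2 * (n + 1) + c ^ 2) + C (2 * c) * X = C (2 * c) * (X + C (v / c)) := by
      rw [mul_add (C _), ← C_mul, add_comm, mul_assoc 2 c, mul_div_cancel₀ _ hc, hv, hw]
      ring_nf
    have h₀ := eval_H_eq_varHermite v hc hw n
    have h₁ := eval_H_eq_varHermite v hc hw (n + 1)
    rw [hlin, resultant_C_mul_right,
      resultant_X_add_C_right _ _ _ (natDegree_quasiHermite_le n c), ← mul_assoc, ← mul_pow,
      discFactor_succ, eval_add, eval_mul, eval_C, ← hv,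
      show 2 * c * -1 = 2 * -c by ring, mul_pow, show (4 : ℚ_[2]) = 2 * 2 by norm_num, mul_pow]
    linear_combination 2 ^ (n + 1) * h₁ - 2 ^ (n + 1) * c ^ 2 * h₀
      - 2 ^ (n + 1) * 2 ^ n * varHermite v w n * hw

theorem discr_quasiHermite (n : ℕ) {c w : ℚ_[2]} (hw : c ^ 2 = 2 * w) :
    (H (n + 1) + C c * H n).discr = hermiteRes (n + 1) * discFactor (n + 1) w := by
  set f := H (n + 1) + C c * H n with hf
  have hdeg : f.natDegree = n + 1 := natDegree_quasiHermite n c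
  have hcoeff : f.coeff (n + 1) = 2 ^ (n + 1) := coeff_quasiHermite_self n c
  have hder : (derivative f).natDegree ≤ n := (natDegree_derivative_le f).trans (by simp [hdeg])
  have hlin : (C (2 * (n + 1) + c ^ 2) + C (2 * c) * X : ℚ_[2][X]).natDegree ≤ 1 := by
    compute_degree
  have hdiscr := resultant_deriv (natDegree_pos_iff_degree_pos.1 (by rw [hdeg]; exact n.succ_pos))
  rw [leadingCoeff, hdeg, hcoeff, Nat.add_sub_cancel] at hdiscr
  have hres : resultant f (H n) (n + 1) n = resultant (H (n + 1)) (H n) (n + 1) n := by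
    rw [hf, mul_comm (C c), resultant_add_mul_left _ _ _ _ _ (by simp) (natDegree_H_le n)]
  have key : 2 ^ (n + 1) * resultant f (derivative f) (n + 1) n =
      resultant (H (n + 1)) (H n) (n + 1) n * (4 ^ (n + 1) * discFactor (n + 1) w) := by
    rw [← resultant_quasiHermite_linear n hw, ← hres,
      ← resultant_mul_right_of_natDegree_le hdeg.le (natDegree_H_le n) hlin,
      ← derivative_quasiHermite, resultant_add_mul_right _ _ _ _ _ (by simp) hdeg.le,
      resultant_add_right_deg _ _ _ _ 1 hder, hcoeff, pow_one]
  rw [hdiscr, resultant_H_succ, show (4 : ℚ_[2]) = 2 * 2 by norm_num, mul_pow] at key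
  have hne : (-1 : ℚ_[2]) ^ ((n + 1) * n / 2) * (2 ^ (n + 1) * 2 ^ (n + 1)) ≠ 0 := by simp
  apply mul_left_cancel₀ hne
  linear_combination key

theorem discFactor_add_two (m : ℕ) (w : R) : discFactor (m + 2) w =
    (m + 2) * varHermite (m + 2 + w) w (m + 1) - (m + 1) * w * varHermite (m + 2 + w) w m := by
  have hcast : ((m + 1 : ℕ) : R) + 1 = m + 2 := by push_cast; ring
  rw [discFactor_succ, hcast, varHermite_add_two]
  ring

theorem map_discFactor (φ : R →+* S) (n : ℕ) (w : R) :
    φ (discFactor n w) = discFactor n (φ w) := by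
  simp [discFactor, map_varHermite]

/-- The reversal of `discFactor (m + 2)` as a polynomial of degree `m + 1`, which describes it
near `w = ∞`. -/
def largeCofactor (m : ℕ) (z : R) : R :=
  (m + 2) * varHermite (1 + (m + 2) * z) z (m + 1) - (m + 1) * varHermite (1 + (m + 2) * z) z m

/-- The polynomial `discFactor (m + 2)` after the scaling `w = (m + 2) ^ 2 * z`, normalised to
constant term `1`, which describes it near `w = 0`. -/
def smallCofactor (m : ℕ) (z : R) : R :=
  varHermite (1 + (m + 2) * z) z (m + 1) - (m + 1) * z * varHermite (1 + (m + 2) * z) z m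

theorem map_largeCofactor (φ : R →+* S) (m : ℕ) (z : R) :
    φ (largeCofactor m z) = largeCofactor m (φ z) := by
  simp [largeCofactor, map_varHermite, map_ofNat φ 2]

theorem map_smallCofactor (φ : R →+* S) (m : ℕ) (z : R) :
    φ (smallCofactor m z) = smallCofactor m (φ z) := by
  simp [smallCofactor, map_varHermite, map_ofNat φ 2]

theorem discFactor_of_mul_eq_one {w z : R} (h : w * z = 1) (m : ℕ) :
    discFactor (m + 2) w = w ^ (m + 1) * largeCofactor m z := by
  have hv : (m + 2 : R) + w = w * (1 + (m + 2) * z) := by linear_combination -(m + 2 : R) * h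
  have hw : w = w ^ 2 * z := by linear_combination -w * h
  have hscale (k : ℕ) : varHermite (m + 2 + w) w k = w ^ k * varHermite (1 + (m + 2) * z) z k := by
    rw [← varHermite_mul_sq_mul, ← hv, ← hw]
  rw [discFactor_add_two, hscale, hscale, largeCofactor]
  ring

theorem discFactor_sq_mul (m : ℕ) (z : R) :
    discFactor (m + 2) ((m + 2) ^ 2 * z) = (m + 2) ^ (m + 2) * smallCofactor m z := by
  have hv : (m + 2 : R) + (m + 2) ^ 2 * z = (m + 2) * (1 + (m + 2) * z) := by ring
  rw [discFactor_add_two, hv, varHermite_mul_sq_mul, varHermite_mul_sq_mul, smallCofactor]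
  ring

theorem varHermite_of_sq_eq_zero {z : R} (hz : z ^ 2 = 0) (N : R) (m : ℕ) :
    varHermite (1 + N * z) z m = 1 + (m * N - m.choose 2) * z := by
  induction m using Nat.twoStepInduction with
  | zero => simp [varHermite]
  | one => simp [varHermite]
  | more m ih₀ ih₁ =>
    rw [varHermite_add_two, ih₀, ih₁, Nat.choose_succ_succ' (m + 1) 1, Nat.choose_one_right]
    push_cast
    linear_combination (N * ((m + 1) * N - (m + 1).choose 2)
      - (m + 1) * (m * N - m.choose 2)) * hz

theorem choose_two_succ (n : ℕ) : (n + 1).choose 2 = n + n.choose 2 := by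
  rw [Nat.choose_succ_succ' n 1, Nat.choose_one_right]

theorem cast_choose_two_succ_mul_two (n : ℕ) :
    (((n + 1).choose 2 : ℕ) : R) * 2 = (n + 1) * n := by
  have h := Nat.add_one_mul_choose_eq n 1
  rw [Nat.choose_one_right] at h
  exact_mod_cast congrArg (Nat.cast (R := R)) h.symm

theorem largeCofactor_of_sq_eq_zero {z : R} (hz : z ^ 2 = 0) (h2z : 2 * z = 0) (m : ℕ) :
    largeCofactor m z = 1 + ((m + 3).choose 2 - 1) * z := by
  have h := cast_choose_two_succ_mul_two (R := R) m
  rw [largeCofactor, varHermite_of_sq_eq_zero hz, varHermite_of_sq_eq_zero hz,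
    choose_two_succ (m + 2), choose_two_succ (m + 1)]
  rw [choose_two_succ m] at h ⊢
  push_cast at h ⊢
  linear_combination (m + 1) * h2z - z * h

theorem smallCofactor_of_sq_eq_zero {z : R} (hz : z ^ 2 = 0) (m : ℕ) :
    smallCofactor m z = 1 + (m + 2).choose 2 * z := by
  have h := cast_choose_two_succ_mul_two (R := R) m
  rw [smallCofactor, varHermite_of_sq_eq_zero hz, varHermite_of_sq_eq_zero hz,
    choose_two_succ (m + 1)]
  push_cast
  linear_combination -z * h - (m + 1) * (m * (m + 2) - m.choose 2) * hz

/-- The pair of polynomials `2 ^ j j! L_j^(-1/2)(x / 2)` and `2 ^ j j! L_j^(1/2)(x / 2)`, with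
`L_j^(a)` the generalised Laguerre polynomials. They are the even-indexed and odd-indexed
`varHermite v w` in the variable `x = v ^ 2 / w`, up to a monomial factor. -/
def laguerrePair (x : R) : ℕ → R × R
  | 0 => (1, 1)
  | j + 1 =>
    ((2 * j + 1) * (laguerrePair x j).1 - x * (laguerrePair x j).2,
      (2 * j + 1) * (laguerrePair x j).1 - x * (laguerrePair x j).2
        + (2 * j + 2) * (laguerrePair x j).2)

theorem laguerrePair_succ (x : R) (j : ℕ) : laguerrePair x (j + 1) =
    ((2 * j + 1) * (laguerrePair x j).1 - x * (laguerrePair x j).2,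
      (2 * j + 1) * (laguerrePair x j).1 - x * (laguerrePair x j).2
        + (2 * j + 2) * (laguerrePair x j).2) := by
  rw [laguerrePair]

theorem map_laguerrePair (φ : R →+* S) (x : R) (j : ℕ) :
    (laguerrePair x j).map φ φ = laguerrePair (φ x) j := by
  induction j with
  | zero => simp [laguerrePair]
  | succ j ih => simp [laguerrePair, ← ih, map_ofNat φ 2]

theorem varHermite_eq_laguerrePair {v w x : R} (h : v ^ 2 = x * w) (j : ℕ) :
    varHermite v w (2 * j) = (-w) ^ j * (laguerrePair x j).1 ∧
      varHermite v w (2 * j + 1) = (-w) ^ j * v * (laguerrePair x j).2 := by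
  induction j with
  | zero => simp [varHermite, laguerrePair]
  | succ j ih =>
    have heven : varHermite v w (2 * (j + 1)) = (-w) ^ (j + 1) * (laguerrePair x (j + 1)).1 := by
      rw [mul_add_one, varHermite_add_two, ih.1, ih.2, laguerrePair_succ]
      push_cast
      linear_combination (-w) ^ j * (laguerrePair x j).2 * h
    refine ⟨heven, ?_⟩
    rw [mul_add_one, varHermite_add_two, ← mul_add_one 2 j, heven, ih.2, laguerrePair_succ]
    push_cast
    ring

theorem discFactor_of_sq_eq {w x : R} (j : ℕ) (h : (2 * j + 2 + w) ^ 2 = x * w) :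
    discFactor (2 * j + 2) w = (-w) ^ (j + 1) *
      ((laguerrePair x (j + 1)).1 + (2 * j + 2 + w) * (laguerrePair x j).2) := by
  have hcast : ((2 * j + 1 : ℕ) : R) + 1 + w = 2 * j + 2 + w := by push_cast; ring
  rw [discFactor_succ, hcast, (varHermite_eq_laguerrePair h j).2,
    show 2 * j + 1 + 1 = 2 * (j + 1) by ring, (varHermite_eq_laguerrePair h (j + 1)).1]
  ring

end VarHermite

section Residues

theorem even_choose_two_iff (n : ℕ) : Even (n.choose 2) ↔ n % 4 = 0 ∨ n % 4 = 1 := by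
  have hper : Function.Periodic (fun k : ℕ ↦ Even (k.choose 2)) 4 := fun k ↦ by
    simp only [choose_two_succ (k + 3), choose_two_succ (k + 2), choose_two_succ (k + 1),
      choose_two_succ k, Nat.even_iff, eq_iff_iff]
    omega
  rw [← hper.map_mod_nat n]
  have := Nat.mod_lt n four_pos
  interval_cases n % 4 <;> decide

theorem largeCofactor_two_mul_sq (m : ℕ) (d : ZMod 4) :
    largeCofactor m (2 * d ^ 2) = 1 + ((m + 3).choose 2 - 1) * (2 * d ^ 2) :=
  largeCofactor_of_sq_eq_zero (by revert d; decide) (by revert d; decide) m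

theorem smallCofactor_two_mul_sq (m : ℕ) (d : ZMod 4) :
    smallCofactor m (2 * d ^ 2) = 1 + (m + 2).choose 2 * (2 * d ^ 2) :=
  smallCofactor_of_sq_eq_zero (by revert d; decide) m

theorem isUnit_one_add_mul_two_mul_sq (a d : ZMod 4) : IsUnit (1 + a * (2 * d ^ 2)) := by
  revert a d
  decide

theorem isUnit_largeCofactor_two_mul_sq (m : ℕ) (d : ZMod 4) :
    IsUnit (largeCofactor m (2 * d ^ 2)) := by
  rw [largeCofactor_two_mul_sq]
  exact isUnit_one_add_mul_two_mul_sq _ _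

theorem isUnit_smallCofactor_two_mul_sq (m : ℕ) (d : ZMod 4) :
    IsUnit (smallCofactor m (2 * d ^ 2)) := by
  rw [smallCofactor_two_mul_sq]
  exact isUnit_one_add_mul_two_mul_sq _ _

theorem largeCofactor_two_mul_sq_eq_one {m : ℕ} (hm : (m + 2) % 4 = 1 ∨ (m + 2) % 4 = 2)
    (d : ZMod 4) : largeCofactor m (2 * d ^ 2) = 1 := by
  have hodd : Odd ((m + 3).choose 2) := by
    rw [← Nat.not_even_iff_odd, even_choose_two_iff]
    omega
  obtain ⟨k, hk⟩ := hodd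
  rw [largeCofactor_two_mul_sq, hk]
  push_cast
  have h4 : (4 : ZMod 4) = 0 := by decide
  linear_combination k * d ^ 2 * h4

theorem smallCofactor_two_mul_sq_eq_one {m : ℕ} (hm : (m + 2) % 4 = 0 ∨ (m + 2) % 4 = 1)
    (d : ZMod 4) : smallCofactor m (2 * d ^ 2) = 1 := by
  obtain ⟨k, hk⟩ := (even_choose_two_iff (m + 2)).2 hm
  rw [smallCofactor_two_mul_sq, hk]
  push_cast
  have h4 : (4 : ZMod 4) = 0 := by decide
  linear_combination k * d ^ 2 * h4

theorem laguerrePair_periodic {x : ZMod 8} (hx : x = 0 ∨ x = 2) :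
    Function.Periodic (laguerrePair x) 4 := by
  intro j
  induction j with
  | zero => rcases hx with rfl | rfl <;> decide
  | succ j ih =>
    have h8 : (2 : ZMod 8) * 4 = 0 := by decide
    rw [add_right_comm, laguerrePair_succ x (j + 4), laguerrePair_succ x j, ih]
    push_cast
    simp only [mul_add, h8, add_zero]

theorem laguerrePair_two_succ_fst {j : ℕ} (hj : j % 4 = 1) :
    (laguerrePair (2 : ZMod 8) (j + 1)).1 = 3 := by
  rw [← (laguerrePair_periodic (Or.inr rfl)).map_mod_nat, Nat.add_mod, hj]
  decide

theorem laguerrePair_two_snd {j : ℕ} (hj : j % 4 = 1) : (laguerrePair (2 : ZMod 8) j).2 = 1 := by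
  rw [← (laguerrePair_periodic (Or.inr rfl)).map_mod_nat, hj]
  decide

theorem laguerrePair_zero_succ_fst {j : ℕ} (hj : j % 4 = 2) :
    (laguerrePair (0 : ZMod 8) (j + 1)).1 = 7 := by
  rw [← (laguerrePair_periodic (Or.inl rfl)).map_mod_nat, Nat.add_mod, hj]
  decide

theorem doubleFactorial_two_mul_sub_one_mod_eight_periodic :
    Function.Periodic (fun j : ℕ ↦ Nat.doubleFactorial (2 * j - 1) % 8) 4 := by
  intro j
  have hodd : ∀ x : ZMod 8, (2 * x + 7) * ((2 * x + 5) * ((2 * x + 3) * (2 * x + 1))) = 1 := by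
    decide
  have h : Nat.doubleFactorial (2 * (j + 4) - 1) = (2 * j + 7) * ((2 * j + 5) *
      ((2 * j + 3) * ((2 * j + 1) * Nat.doubleFactorial (2 * j - 1)))) := by
    rw [← Nat.doubleFactorial_add_one (2 * j), ← Nat.doubleFactorial_add_two (2 * j + 1),
      ← Nat.doubleFactorial_add_two, ← Nat.doubleFactorial_add_two]
    rfl
  simp only [h]
  rw [← ZMod.natCast_eq_natCast_iff']
  push_cast
  linear_combination (Nat.doubleFactorial (2 * j - 1) : ZMod 8) * hodd j

theorem doubleFactorial_two_mul_sub_one_mod_eight (j : ℕ) :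
    Nat.doubleFactorial (2 * j - 1) % 8 = Nat.doubleFactorial (2 * (j % 4) - 1) % 8 :=
  (doubleFactorial_two_mul_sub_one_mod_eight_periodic.map_mod_nat j).symm

end Residues

section SquareClasses

variable {F : Type*} [Field F] {a b c d : F}

/-- Equality of `a` and `b` up to a nonzero square factor. -/
def SqEquiv (a b : F) : Prop := ∃ s : F, s ≠ 0 ∧ a = b * s ^ 2

theorem SqEquiv.refl (a : F) : SqEquiv a a := ⟨1, one_ne_zero, by simp⟩

theorem SqEquiv.trans (hab : SqEquiv a b) (hbc : SqEquiv b c) : SqEquiv a c := by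
  obtain ⟨s, hs, rfl⟩ := hab
  obtain ⟨t, ht, rfl⟩ := hbc
  exact ⟨t * s, mul_ne_zero ht hs, by ring⟩

theorem SqEquiv.mul (hab : SqEquiv a b) (hcd : SqEquiv c d) : SqEquiv (a * c) (b * d) := by
  obtain ⟨s, hs, rfl⟩ := hab
  obtain ⟨t, ht, rfl⟩ := hcd
  exact ⟨s * t, mul_ne_zero hs ht, by ring⟩

theorem sqEquiv_mul_sq (a : F) (hb : b ≠ 0) : SqEquiv (a * b ^ 2) a := ⟨b, hb, rfl⟩

theorem sqEquiv_pow_of_even (ha : a ≠ 0) {n : ℕ} (hn : Even n) : SqEquiv (a ^ n) 1 := by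
  obtain ⟨k, rfl⟩ := hn
  exact ⟨a ^ k, pow_ne_zero k ha, by ring⟩

theorem sqEquiv_pow_of_odd (ha : a ≠ 0) {n : ℕ} (hn : Odd n) : SqEquiv (a ^ n) a := by
  obtain ⟨k, rfl⟩ := hn
  exact ⟨a ^ k, pow_ne_zero k ha, by ring⟩

theorem sqEquiv_hermiteRes [CharZero F] (n : ℕ) :
    SqEquiv (hermiteRes n : F) (2 ^ (n / 2) * (Nat.doubleFactorial (2 * (n / 2) - 1) : ℕ)) := by
  induction n with
  | zero => simpa [hermiteRes] using SqEquiv.refl (1 : F)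
  | succ n ih =>
    rw [hermiteRes_succ]
    push_cast
    rcases n.even_or_odd' with ⟨k, rfl | rfl⟩
    · rw [show (2 * k + 1) / 2 = 2 * k / 2 by omega]
      have hpow : SqEquiv ((8 * ((2 * k : ℕ) : F)) ^ (2 * k)) 1 := by
        rcases Nat.eq_zero_or_pos k with rfl | hk
        · simpa using SqEquiv.refl (1 : F)
        · refine sqEquiv_pow_of_even ?_ (even_two_mul k)
          exact_mod_cast (by positivity : 8 * (2 * k) ≠ 0)
      simpa only [mul_one] using ih.mul hpow
    · rw [show (2 * k + 1) / 2 = k by omega] at ih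
      rw [show (2 * k + 1 + 1) / 2 = k + 1 by omega]
      have hpow : SqEquiv ((8 * ((2 * k + 1 : ℕ) : F)) ^ (2 * k + 1)) (2 * (2 * k + 1 : ℕ)) := by
        have h8 : (8 * ((2 * k + 1 : ℕ) : F)) = 2 * (2 * k + 1 : ℕ) * 2 ^ 2 := by ring
        refine (sqEquiv_pow_of_odd ?_ (odd_two_mul_add_one k)).trans ?_
        · exact_mod_cast (by positivity : 8 * (2 * k + 1) ≠ 0)
        · rw [h8]
          exact sqEquiv_mul_sq _ two_ne_zero
      convert ih.mul hpow using 1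
      rw [show 2 * (k + 1) - 1 = 2 * k + 1 by omega, Nat.doubleFactorial_add_one]
      push_cast
      ring

end SquareClasses

section PadicIntegers

theorem not_isSquare_of_sqEquiv {p : ℕ} [Fact p.Prime] {S : Type*} [CommRing S] (φ : ℤ_[p] →+* S)
    {a : ℚ_[p]} {g : ℤ_[p]} (ha : SqEquiv a g) (hg : ¬IsSquare (φ g)) : ¬IsSquare a := by
  rintro ⟨y, rfl⟩
  obtain ⟨s, hs, hy⟩ := ha
  have hsq : (y / s) ^ 2 = (g : ℚ_[p]) := by
    rw [div_pow, div_eq_iff (pow_ne_zero 2 hs), ← hy, sq]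
  have hnorm : ‖y / s‖ ≤ 1 := by
    rw [← sq_le_one_iff₀ (norm_nonneg _), ← norm_pow, hsq]
    exact g.2
  let h : ℤ_[p] := ⟨y / s, hnorm⟩
  have hgh : g = h ^ 2 := Subtype.ext hsq.symm
  exact hg ⟨φ h, by rw [hgh, map_pow, sq]⟩

theorem not_isSquare_mul_of_sqEquiv {p : ℕ} [Fact p.Prime] {S : Type*} [CommRing S]
    (φ : ℤ_[p] →+* S) {a b : ℚ_[p]} {g h : ℤ_[p]} (ha : SqEquiv a g) (hb : SqEquiv b h)
    (hgh : ¬IsSquare (φ g * φ h)) : ¬IsSquare (a * b) := by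
  refine not_isSquare_of_sqEquiv φ (g := g * h) ?_ (by rwa [map_mul])
  rw [PadicInt.coe_mul]
  exact ha.mul hb

theorem two_dvd_of_not_isUnit {a : ℤ_[2]} (ha : ¬IsUnit a) : 2 ∣ a := by
  rw [PadicInt.isUnit_iff] at ha
  exact_mod_cast (PadicInt.norm_lt_one_iff_dvd a).1 (lt_of_le_of_ne (PadicInt.norm_le_one a) ha)

theorem exists_mul_eq_one_or_eq_two_mul (c : ℚ_[2]) :
    (∃ d : ℤ_[2], c * d = 1) ∨ ∃ b : ℤ_[2], c = 2 * b := by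
  rcases eq_or_ne c 0 with rfl | hc
  · exact Or.inr ⟨0, by simp⟩
  rcases ValuationRing.isInteger_or_isInteger ℤ_[2] c with ⟨a, rfl⟩ | ⟨d, hd⟩
  · by_cases ha : IsUnit a
    · obtain ⟨d, hd⟩ := ha.exists_right_inv
      exact Or.inl ⟨d, by exact_mod_cast congrArg ((↑) : ℤ_[2] → ℚ_[2]) hd⟩
    · obtain ⟨b, rfl⟩ := two_dvd_of_not_isUnit ha
      exact Or.inr ⟨b, by rw [map_mul, map_ofNat]; rfl⟩
  · exact Or.inl ⟨d, by rw [show (d : ℚ_[2]) = c⁻¹ from hd, mul_inv_cancel₀ hc]⟩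

/-- Reduction of `2`-adic integers modulo `4`. -/
noncomputable def mod4 : ℤ_[2] →+* ZMod 4 := PadicInt.toZModPow 2

/-- Reduction of `2`-adic integers modulo `8`. -/
noncomputable def mod8 : ℤ_[2] →+* ZMod 8 := PadicInt.toZModPow 3

theorem isUnit_natCast_of_odd {m : ℕ} (hm : Odd m) : IsUnit (m : ℤ_[2]) := by
  rw [PadicInt.isUnit_iff, PadicInt.norm_natCast_eq_one_iff]
  exact (Nat.coprime_two_left).2 hm

theorem sq_eq_one_of_isUnit {x : ZMod 8} (hx : IsUnit x) : x ^ 2 = 1 := by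
  revert x
  decide

theorem two_mul_natCast_dvd {l : ℕ} (hl : Odd l) {b : ℤ_[2]} (hb : 2 ∣ b) :
    2 * (l : ℤ_[2]) ∣ b := by
  obtain ⟨b, rfl⟩ := hb
  exact mul_dvd_mul_left 2 (isUnit_natCast_of_odd hl).dvd

theorem padicInt_coe_two : ((2 : ℤ_[2]) : ℚ_[2]) = 2 := map_ofNat PadicInt.Coe.ringHom 2

theorem not_isSquare_mul_of_sqEquiv_two_mul {S : Type*} [CommRing S] (φ : ℤ_[2] →+* S)
    {a b : ℚ_[2]} {g h : ℤ_[2]} (ha : SqEquiv a (2 * g : ℤ_[2])) (hb : SqEquiv b (2 * h : ℤ_[2]))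
    (hgh : ¬IsSquare (φ g * φ h)) : ¬IsSquare (a * b) := by
  refine not_isSquare_of_sqEquiv φ (g := g * h) ?_ (by rwa [map_mul])
  refine (ha.mul hb).trans ⟨2, two_ne_zero, ?_⟩
  push_cast [padicInt_coe_two]
  ring

end PadicIntegers

section SquareClassesOfFactors

theorem sqEquiv_hermiteRes_of_even {n : ℕ} (hn : Even (n / 2)) : SqEquiv (hermiteRes n : ℚ_[2])
    (((2 * (n / 2) - 1).doubleFactorial : ℕ) : ℤ_[2]) := by
  simpa using (sqEquiv_hermiteRes n).trans
    ((sqEquiv_pow_of_even (two_ne_zero' ℚ_[2]) hn).mul (SqEquiv.refl _))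

theorem sqEquiv_hermiteRes_of_odd {n : ℕ} (hn : Odd (n / 2)) : SqEquiv (hermiteRes n : ℚ_[2])
    (2 * ((2 * (n / 2) - 1).doubleFactorial : ℕ) : ℤ_[2]) := by
  simpa [padicInt_coe_two] using (sqEquiv_hermiteRes n).trans
    ((sqEquiv_pow_of_odd (two_ne_zero' ℚ_[2]) hn).mul (SqEquiv.refl _))

theorem exists_sqEquiv_hermiteRes_of_mod_four_eq_three {n : ℕ} (hn : n % 4 = 3) :
    ∃ u : ℕ, Odd u ∧ SqEquiv (hermiteRes n : ℚ_[2]) (2 * u : ℤ_[2]) := by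
  refine ⟨_, ?_, sqEquiv_hermiteRes_of_odd (Nat.odd_iff.2 (by omega))⟩
  have h := doubleFactorial_two_mul_sub_one_mod_eight (n / 2)
  have h4 : n / 2 % 4 = 1 ∨ n / 2 % 4 = 3 := by omega
  rw [Nat.odd_iff]
  rcases h4 with h4 | h4 <;> rw [h4] at h
  · have hfact : Nat.doubleFactorial (2 * 1 - 1) % 8 = 1 := by decide
    omega
  · have hfact : Nat.doubleFactorial (2 * 3 - 1) % 8 = 7 := by decide
    omega

theorem exists_sqEquiv_hermiteRes_of_mod_eight_eq_four_or_five {n : ℕ}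
    (hn : n % 8 = 4 ∨ n % 8 = 5) :
    ∃ u : ℕ, u % 8 = 3 ∧ SqEquiv (hermiteRes n : ℚ_[2]) (u : ℤ_[2]) := by
  refine ⟨_, ?_, sqEquiv_hermiteRes_of_even (Nat.even_iff.2 (by omega))⟩
  rw [doubleFactorial_two_mul_sub_one_mod_eight, show n / 2 % 4 = 2 by omega]
  decide

theorem exists_sqEquiv_hermiteRes_of_mod_eight_eq_six {n : ℕ} (hn : n % 8 = 6) :
    ∃ u : ℕ, u % 8 = 7 ∧ SqEquiv (hermiteRes n : ℚ_[2]) (2 * u : ℤ_[2]) := by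
  refine ⟨_, ?_, sqEquiv_hermiteRes_of_odd (Nat.odd_iff.2 (by omega))⟩
  rw [doubleFactorial_two_mul_sub_one_mod_eight, show n / 2 % 4 = 3 by omega]
  decide

theorem coe_largeCofactor (m : ℕ) (z : ℤ_[2]) :
    (largeCofactor m z : ℤ_[2]) = largeCofactor m (z : ℚ_[2]) :=
  map_largeCofactor PadicInt.Coe.ringHom m z

theorem coe_smallCofactor (m : ℕ) (z : ℤ_[2]) :
    (smallCofactor m z : ℤ_[2]) = smallCofactor m (z : ℚ_[2]) :=
  map_smallCofactor PadicInt.Coe.ringHom m z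

theorem coe_discFactor (n : ℕ) (w : ℤ_[2]) :
    (discFactor n w : ℤ_[2]) = discFactor n (w : ℚ_[2]) :=
  map_discFactor PadicInt.Coe.ringHom n w

theorem mod4_largeCofactor (m : ℕ) (d : ℤ_[2]) :
    mod4 (largeCofactor m (2 * d ^ 2)) = largeCofactor m (2 * mod4 d ^ 2) := by
  rw [map_largeCofactor, map_mul, map_pow, map_ofNat]

theorem mod4_smallCofactor (m : ℕ) (b : ℤ_[2]) :
    mod4 (smallCofactor m (2 * b ^ 2)) = smallCofactor m (2 * mod4 b ^ 2) := by
  rw [map_smallCofactor, map_mul, map_pow, map_ofNat]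

theorem discFactor_eq_largeCofactor {c : ℚ_[2]} {d : ℤ_[2]} (h : c * d = 1) (m : ℕ) :
    discFactor (m + 2) (c ^ 2 / 2) =
      (c ^ 2 / 2) ^ (m + 1) * (largeCofactor m (2 * d ^ 2) : ℤ_[2]) := by
  have hw : c ^ 2 / 2 * (2 * (d : ℚ_[2]) ^ 2) = 1 := by linear_combination (c * d + 1) * h
  rw [discFactor_of_mul_eq_one hw, coe_largeCofactor]
  push_cast [padicInt_coe_two]
  rfl

theorem discFactor_eq_smallCofactor (m : ℕ) (b : ℤ_[2]) :
    discFactor (m + 2) ((2 * (((m + 2 : ℕ) : ℤ_[2]) * b : ℤ_[2])) ^ 2 / 2 : ℚ_[2]) =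
      ((m + 2 : ℕ) : ℚ_[2]) ^ (m + 2) * (smallCofactor m (2 * b ^ 2) : ℤ_[2]) := by
  have hw : (2 * (((m + 2 : ℕ) : ℤ_[2]) * b : ℤ_[2])) ^ 2 / 2 =
      (m + 2 : ℚ_[2]) ^ 2 * (2 * b ^ 2) := by
    push_cast [padicInt_coe_two]
    ring
  rw [hw, discFactor_sq_mul, coe_smallCofactor]
  push_cast [padicInt_coe_two]
  rfl

theorem sqEquiv_discFactor_large_of_odd {c : ℚ_[2]} {d : ℤ_[2]} (h : c * d = 1) {m : ℕ}
    (hm : Odd m) : SqEquiv (discFactor (m + 2) (c ^ 2 / 2))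
      ((largeCofactor m (2 * d ^ 2) : ℤ_[2]) : ℚ_[2]) := by
  have hw : c ^ 2 / 2 ≠ 0 := div_ne_zero (pow_ne_zero 2 (left_ne_zero_of_mul_eq_one h)) two_ne_zero
  rw [discFactor_eq_largeCofactor h]
  simpa using (sqEquiv_pow_of_even hw hm.add_one).mul (SqEquiv.refl _)

theorem sqEquiv_discFactor_large_of_even {c : ℚ_[2]} {d : ℤ_[2]} (h : c * d = 1) {m : ℕ}
    (hm : Even m) :
    SqEquiv (discFactor (m + 2) (c ^ 2 / 2))
      ((2 * largeCofactor m (2 * d ^ 2) : ℤ_[2]) : ℚ_[2]) := by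
  have hc : c ≠ 0 := left_ne_zero_of_mul_eq_one h
  have hw : c ^ 2 / 2 = 2 * (c / 2) ^ 2 := by ring
  have hpow : SqEquiv ((c ^ 2 / 2) ^ (m + 1)) 2 := by
    refine (sqEquiv_pow_of_odd (div_ne_zero (pow_ne_zero 2 hc) two_ne_zero) hm.add_one).trans ?_
    rw [hw]
    exact sqEquiv_mul_sq 2 (div_ne_zero hc two_ne_zero)
  rw [discFactor_eq_largeCofactor h, PadicInt.coe_mul, padicInt_coe_two]
  exact hpow.mul (SqEquiv.refl _)

theorem sqEquiv_discFactor_small_of_even {m : ℕ} (hm : Even m) (b : ℤ_[2]) :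
    SqEquiv (discFactor (m + 2) ((2 * (((m + 2 : ℕ) : ℤ_[2]) * b : ℤ_[2])) ^ 2 / 2 : ℚ_[2]))
      (smallCofactor m (2 * b ^ 2) : ℤ_[2]) := by
  have hm2 : ((m + 2 : ℕ) : ℚ_[2]) ≠ 0 := Nat.cast_ne_zero.2 (m + 1).succ_ne_zero
  rw [discFactor_eq_smallCofactor]
  simpa only [one_mul] using (sqEquiv_pow_of_even hm2 (hm.add even_two)).mul (SqEquiv.refl _)

theorem sqEquiv_discFactor_small_of_odd {m : ℕ} (hm : Odd m) (b : ℤ_[2]) :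
    SqEquiv (discFactor (m + 2) ((2 * (((m + 2 : ℕ) : ℤ_[2]) * b : ℤ_[2])) ^ 2 / 2 : ℚ_[2]))
      ((m + 2 : ℕ) * smallCofactor m (2 * b ^ 2) : ℤ_[2]) := by
  have hm2 : ((m + 2 : ℕ) : ℚ_[2]) ≠ 0 := Nat.cast_ne_zero.2 (m + 1).succ_ne_zero
  rw [discFactor_eq_smallCofactor, PadicInt.coe_mul, PadicInt.coe_natCast]
  exact (sqEquiv_pow_of_odd hm2 (hm.add_even even_two)).mul (SqEquiv.refl _)

end SquareClassesOfFactors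

section OddDegree

theorem exists_sqEquiv_discFactor_of_odd {m : ℕ} (hm : Odd m) (c : ℚ_[2]) :
    ∃ a : ℤ_[2], SqEquiv (discFactor (m + 2) (c ^ 2 / 2)) (a : ℚ_[2]) ∧ IsUnit (mod4 a) ∧
      ((m + 2) % 4 = 1 → mod4 a = 1) := by
  rcases exists_mul_eq_one_or_eq_two_mul c with ⟨d, hd⟩ | ⟨b, rfl⟩
  · refine ⟨_, sqEquiv_discFactor_large_of_odd hd hm, ?_, fun h ↦ ?_⟩ <;> rw [mod4_largeCofactor]
    · exact isUnit_largeCofactor_two_mul_sq m _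
    · exact largeCofactor_two_mul_sq_eq_one (Or.inl h) _
  · have hunit : IsUnit ((m + 2 : ℕ) : ℤ_[2]) := isUnit_natCast_of_odd (hm.add_even even_two)
    obtain ⟨b, rfl⟩ := hunit.dvd (a := b)
    refine ⟨_, sqEquiv_discFactor_small_of_odd hm b, ?_, fun h ↦ ?_⟩ <;>
      rw [map_mul, mod4_smallCofactor]
    · exact (hunit.map mod4).mul (isUnit_smallCofactor_two_mul_sq m _)
    · rw [smallCofactor_two_mul_sq_eq_one (Or.inr h), mul_one, map_natCast, ← ZMod.natCast_mod, h,
        Nat.cast_one]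

theorem not_isSquare_two_mul_of_isUnit {x : ZMod 4} (hx : IsUnit x) : ¬IsSquare (2 * x) := by
  revert x
  decide

theorem not_isSquare_hermiteRes_mul_discFactor_of_mod_four_eq_three {n : ℕ} (hn : n % 4 = 3)
    (c : ℚ_[2]) : ¬IsSquare ((hermiteRes n : ℚ_[2]) * discFactor n (c ^ 2 / 2)) := by
  obtain ⟨m, rfl⟩ := Nat.exists_eq_add_of_le' (show 2 ≤ n by omega)
  obtain ⟨u, hu, hE⟩ := exists_sqEquiv_hermiteRes_of_mod_four_eq_three hn
  obtain ⟨a, ha, hunit, -⟩ :=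
    exists_sqEquiv_discFactor_of_odd (m := m) (Nat.odd_iff.2 (by omega)) c
  refine not_isSquare_mul_of_sqEquiv mod4 hE ha ?_
  rw [map_mul, map_ofNat, mul_assoc]
  exact not_isSquare_two_mul_of_isUnit (((isUnit_natCast_of_odd hu).map mod4).mul hunit)

theorem not_isSquare_hermiteRes_mul_discFactor_of_mod_eight_eq_five {n : ℕ} (hn : n % 8 = 5)
    (c : ℚ_[2]) : ¬IsSquare ((hermiteRes n : ℚ_[2]) * discFactor n (c ^ 2 / 2)) := by
  obtain ⟨m, rfl⟩ := Nat.exists_eq_add_of_le' (show 2 ≤ n by omega)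
  obtain ⟨u, hu, hE⟩ := exists_sqEquiv_hermiteRes_of_mod_eight_eq_four_or_five (Or.inr hn)
  obtain ⟨a, ha, -, ha_one⟩ :=
    exists_sqEquiv_discFactor_of_odd (m := m) (Nat.odd_iff.2 (by omega)) c
  refine not_isSquare_mul_of_sqEquiv mod4 hE ha ?_
  rw [map_natCast, ha_one (by omega), ← ZMod.natCast_mod, show u % 4 = 3 by omega]
  decide

end OddDegree

section EvenDegree

theorem exists_sqEquiv_discFactor_of_mod8_eq_two {j : ℕ} (hj : j % 4 = 1) {w x : ℤ_[2]}
    (hw : w ≠ 0) (h : (2 * j + 2 + w) ^ 2 = x * w) (hx : mod8 x = 2) :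
    ∃ a : ℤ_[2], SqEquiv (discFactor (2 * j + 2) (w : ℚ_[2])) (a : ℚ_[2]) ∧
      mod8 a = 3 + mod8 (2 * j + 2 + w) := by
  refine ⟨(laguerrePair x (j + 1)).1 + (2 * j + 2 + w) * (laguerrePair x j).2, ?_, ?_⟩
  · have hpow : SqEquiv ((-w : ℚ_[2]) ^ (j + 1)) 1 :=
      sqEquiv_pow_of_even (neg_ne_zero.2 (PadicInt.coe_ne_zero.2 hw)) (Nat.even_iff.2 (by omega))
    rw [← coe_discFactor, discFactor_of_sq_eq j h]
    simpa using hpow.mul (SqEquiv.refl _)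
  · have hfst := congrArg Prod.fst (map_laguerrePair mod8 x (j + 1))
    have hsnd := congrArg Prod.snd (map_laguerrePair mod8 x j)
    rw [hx, laguerrePair_two_succ_fst hj] at hfst
    rw [hx, laguerrePair_two_snd hj] at hsnd
    rw [map_add, map_mul _ _ (laguerrePair x j).2, ← Prod.map_fst mod8 mod8, hfst,
      ← Prod.map_snd mod8 mod8, hsnd, mul_one]

theorem exists_sqEquiv_discFactor_of_mod8_eq_zero {j : ℕ} (hj : j % 4 = 2) {w x : ℤ_[2]}
    (hw : w ≠ 0) (h : (2 * j + 2 + w) ^ 2 = x * w) (hx : mod8 x = 0)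
    (hv : mod8 (2 * j + 2 + w) = 0) :
    ∃ a : ℤ_[2],
      SqEquiv (discFactor (2 * j + 2) (w : ℚ_[2])) ((-w * a : ℤ_[2]) : ℚ_[2]) ∧ mod8 a = 7 := by
  refine ⟨(laguerrePair x (j + 1)).1 + (2 * j + 2 + w) * (laguerrePair x j).2, ?_, ?_⟩
  · have hpow : SqEquiv ((-w : ℚ_[2]) ^ (j + 1)) (-w) :=
      sqEquiv_pow_of_odd (neg_ne_zero.2 (PadicInt.coe_ne_zero.2 hw)) (Nat.odd_iff.2 (by omega))
    rw [← coe_discFactor, discFactor_of_sq_eq j h]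
    simpa using hpow.mul (SqEquiv.refl _)
  · have hfst := congrArg Prod.fst (map_laguerrePair mod8 x (j + 1))
    rw [hx, laguerrePair_zero_succ_fst hj] at hfst
    rw [map_add, map_mul, hv, zero_mul, add_zero, ← Prod.map_fst mod8 mod8, hfst]

theorem exists_sqEquiv_discFactor_two_mul_of_mod_four_eq_one {j : ℕ} (hj : j % 4 = 1)
    {b : ℤ_[2]} (hb : IsUnit b) : ∃ a : ℤ_[2],
      SqEquiv (discFactor (2 * j + 2) ((2 * b) ^ 2 / 2 : ℚ_[2])) (a : ℚ_[2]) ∧ mod8 a = 1 := by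
  obtain ⟨k, rfl⟩ : ∃ k, j = 4 * k + 1 := ⟨j / 4, by omega⟩
  obtain ⟨e, he⟩ := hb.exists_right_inv
  have hb8 : mod8 b ^ 2 = 1 := sq_eq_one_of_isUnit (hb.map mod8)
  set w : ℤ_[2] := 2 * b ^ 2 with hw
  set x : ℤ_[2] := 8 * (2 * k + 1) ^ 2 * e ^ 2 + 2 * (8 * k + 4) + w with hx
  have hwc : (2 * b : ℚ_[2]) ^ 2 / 2 = w := by
    rw [hw]
    push_cast [padicInt_coe_two]
    ring
  have hsq : (2 * (4 * k + 1 : ℕ) + 2 + w) ^ 2 = x * w := by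
    rw [hx, hw]
    push_cast
    linear_combination -16 * (2 * k + 1) ^ 2 * (e * b + 1) * he
  have hx2 : mod8 x = 2 := by
    simp only [hx, hw, map_add, map_mul, map_pow, map_one, map_natCast, map_ofNat, hb8]
    linear_combination ((2 * k + 1) ^ 2 * mod8 e ^ 2 + 2 * k + 1) * ZMod.natCast_self 8
  obtain ⟨a, ha, ha8⟩ := exists_sqEquiv_discFactor_of_mod8_eq_two hj
    (mul_ne_zero two_ne_zero (pow_ne_zero 2 hb.ne_zero)) hsq hx2
  refine ⟨a, hwc ▸ ha, ha8.trans ?_⟩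
  simp only [map_add, map_mul, map_pow, map_natCast, map_ofNat, hb8]
  push_cast
  linear_combination (k + 1) * ZMod.natCast_self 8

theorem exists_sqEquiv_discFactor_four_mul {j : ℕ} (hj : j % 4 = 1) {b : ℤ_[2]} (hb : IsUnit b) :
    ∃ a : ℤ_[2], SqEquiv (discFactor (2 * j + 2) ((2 * (2 * b)) ^ 2 / 2 : ℚ_[2])) (a : ℚ_[2]) ∧
      mod8 a = 7 := by
  obtain ⟨k, rfl⟩ : ∃ k, j = 4 * k + 1 := ⟨j / 4, by omega⟩
  obtain ⟨e, he⟩ := hb.exists_right_inv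
  have he8 : mod8 e ^ 2 = 1 := sq_eq_one_of_isUnit ((IsUnit.of_mul_eq_one_right b he).map mod8)
  set w : ℤ_[2] := 8 * b ^ 2 with hw
  set x : ℤ_[2] := 2 * (2 * k + 1) ^ 2 * e ^ 2 + 2 * (8 * k + 4) + w with hx
  have hwc : (2 * (2 * b) : ℚ_[2]) ^ 2 / 2 = w := by
    rw [hw, show (8 : ℤ_[2]) = 2 ^ 3 by norm_num]
    push_cast [padicInt_coe_two]
    ring
  have hsq : (2 * (4 * k + 1 : ℕ) + 2 + w) ^ 2 = x * w := by
    rw [hx, hw]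
    push_cast
    linear_combination -16 * (2 * k + 1) ^ 2 * (e * b + 1) * he
  have hx2 : mod8 x = 2 := by
    simp only [hx, hw, map_add, map_mul, map_pow, map_one, map_natCast, map_ofNat, he8]
    linear_combination ((k : ZMod 8) ^ 2 + 3 * k + 1 + mod8 b ^ 2) * ZMod.natCast_self 8
  have hw0 : w ≠ 0 := mul_ne_zero (OfNat.ofNat_ne_zero 8) (pow_ne_zero 2 hb.ne_zero)
  obtain ⟨a, ha, ha8⟩ := exists_sqEquiv_discFactor_of_mod8_eq_two hj hw0 hsq hx2
  refine ⟨a, hwc ▸ ha, ha8.trans ?_⟩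
  simp only [hw, map_add, map_mul, map_pow, map_natCast, map_ofNat]
  push_cast
  linear_combination (k + mod8 b ^ 2) * ZMod.natCast_self 8

theorem exists_sqEquiv_discFactor_two_mul_of_mod_four_eq_two {j : ℕ} (hj : j % 4 = 2)
    {b : ℤ_[2]} (hb : IsUnit b) : ∃ a : ℤ_[2],
      SqEquiv (discFactor (2 * j + 2) ((2 * b) ^ 2 / 2 : ℚ_[2])) ((2 * a : ℤ_[2]) : ℚ_[2]) ∧
        mod8 a = 1 := by
  obtain ⟨k, rfl⟩ : ∃ k, j = 4 * k + 2 := ⟨j / 4, by omega⟩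
  obtain ⟨e, he⟩ := hb.exists_right_inv
  have hb8 : mod8 b ^ 2 = 1 := sq_eq_one_of_isUnit (hb.map mod8)
  have he8 : mod8 e ^ 2 = 1 := sq_eq_one_of_isUnit ((IsUnit.of_mul_eq_one_right b he).map mod8)
  set w : ℤ_[2] := 2 * b ^ 2 with hw
  set x : ℤ_[2] := 2 * (4 * k + 3) ^ 2 * e ^ 2 + 2 * (8 * k + 6) + w with hx
  have hwc : (2 * b : ℚ_[2]) ^ 2 / 2 = w := by
    rw [hw]
    push_cast [padicInt_coe_two]
    ring
  have hsq : (2 * (4 * k + 2 : ℕ) + 2 + w) ^ 2 = x * w := by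
    rw [hx, hw]
    push_cast
    linear_combination -4 * (4 * k + 3) ^ 2 * (e * b + 1) * he
  have hx0 : mod8 x = 0 := by
    simp only [hx, hw, map_add, map_mul, map_pow, map_natCast, map_ofNat, hb8, he8]
    linear_combination (4 * (k : ZMod 8) ^ 2 + 8 * k + 4) * ZMod.natCast_self 8
  have hv0 : mod8 (2 * (4 * k + 2 : ℕ) + 2 + w) = 0 := by
    simp only [hw, map_add, map_mul, map_pow, map_natCast, map_ofNat, hb8]
    push_cast
    linear_combination (k + 1) * ZMod.natCast_self 8
  have hw0 : w ≠ 0 := mul_ne_zero two_ne_zero (pow_ne_zero 2 hb.ne_zero)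
  obtain ⟨a, ha, ha8⟩ := exists_sqEquiv_discFactor_of_mod8_eq_zero hj hw0 hsq hx0 hv0
  refine ⟨-a, hwc ▸ ha.trans ⟨b, PadicInt.coe_ne_zero.2 hb.ne_zero, ?_⟩, ?_⟩
  · rw [hw]
    push_cast [padicInt_coe_two]
    ring
  · rw [map_neg, ha8]
    decide

theorem not_isSquare_hermiteRes_mul_discFactor_of_mod_eight_eq_four {n : ℕ} (hn : n % 8 = 4)
    (c : ℚ_[2]) : ¬IsSquare ((hermiteRes n : ℚ_[2]) * discFactor n (c ^ 2 / 2)) := by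
  obtain ⟨j, rfl⟩ : ∃ j, n = 2 * j + 2 := ⟨n / 2 - 1, by omega⟩
  have hj : j % 4 = 1 := by omega
  obtain ⟨u, hu, hE⟩ := exists_sqEquiv_hermiteRes_of_mod_eight_eq_four_or_five (Or.inl hn)
  have hu4 : mod4 u = 3 := by
    rw [map_natCast, ← ZMod.natCast_mod, show u % 4 = 3 by omega, Nat.cast_ofNat]
  have hu8 : mod8 u = 3 := by rw [map_natCast, ← ZMod.natCast_mod, hu, Nat.cast_ofNat]
  rcases exists_mul_eq_one_or_eq_two_mul c with ⟨d, hd⟩ | ⟨b, rfl⟩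
  · refine not_isSquare_mul_of_sqEquiv mod4 hE
      (sqEquiv_discFactor_large_of_even hd (even_two_mul j)) ?_
    rw [map_mul, map_ofNat, mul_left_comm, hu4, mod4_largeCofactor]
    exact not_isSquare_two_mul_of_isUnit
      ((by decide : IsUnit (3 : ZMod 4)).mul (isUnit_largeCofactor_two_mul_sq _ _))
  by_cases hb : IsUnit b
  · obtain ⟨a, ha, ha8⟩ := exists_sqEquiv_discFactor_two_mul_of_mod_four_eq_one hj hb
    refine not_isSquare_mul_of_sqEquiv mod8 hE ha ?_
    rw [hu8, ha8]
    decide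
  obtain ⟨b, rfl⟩ := two_dvd_of_not_isUnit hb
  by_cases hb : IsUnit b
  · obtain ⟨a, ha, ha8⟩ := exists_sqEquiv_discFactor_four_mul hj hb
    rw [PadicInt.coe_mul, padicInt_coe_two]
    refine not_isSquare_mul_of_sqEquiv mod8 hE ha ?_
    rw [hu8, ha8]
    decide
  have hdvd : ((2 * j + 2 : ℕ) : ℤ_[2]) ∣ 2 * b := by
    rw [show 2 * j + 2 = 2 * (2 * ((j + 1) / 2)) by omega]
    push_cast
    exact mul_dvd_mul_left 2 (two_mul_natCast_dvd (Nat.odd_iff.2 (by omega))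
      (two_dvd_of_not_isUnit hb))
  obtain ⟨b', hb'⟩ := hdvd
  rw [hb']
  refine not_isSquare_mul_of_sqEquiv mod4 hE
    (sqEquiv_discFactor_small_of_even (even_two_mul j) b') ?_
  rw [hu4, mod4_smallCofactor, smallCofactor_two_mul_sq_eq_one (Or.inl (by omega))]
  decide

theorem not_isSquare_hermiteRes_mul_discFactor_of_mod_eight_eq_six {n : ℕ} (hn : n % 8 = 6)
    (c : ℚ_[2]) : ¬IsSquare ((hermiteRes n : ℚ_[2]) * discFactor n (c ^ 2 / 2)) := by
  obtain ⟨j, rfl⟩ : ∃ j, n = 2 * j + 2 := ⟨n / 2 - 1, by omega⟩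
  have hj : j % 4 = 2 := by omega
  obtain ⟨u, hu, hE⟩ := exists_sqEquiv_hermiteRes_of_mod_eight_eq_six hn
  have hu4 : mod4 u = 3 := by
    rw [map_natCast, ← ZMod.natCast_mod, show u % 4 = 3 by omega, Nat.cast_ofNat]
  have hu8 : mod8 u = 7 := by rw [map_natCast, ← ZMod.natCast_mod, hu, Nat.cast_ofNat]
  rcases exists_mul_eq_one_or_eq_two_mul c with ⟨d, hd⟩ | ⟨b, rfl⟩
  · refine not_isSquare_mul_of_sqEquiv_two_mul mod4 hE
      (sqEquiv_discFactor_large_of_even hd (even_two_mul j)) ?_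
    rw [hu4, mod4_largeCofactor, largeCofactor_two_mul_sq_eq_one (Or.inr (by omega))]
    decide
  by_cases hb : IsUnit b
  · obtain ⟨a, ha, ha8⟩ := exists_sqEquiv_discFactor_two_mul_of_mod_four_eq_two hj hb
    refine not_isSquare_mul_of_sqEquiv_two_mul mod8 hE ha ?_
    rw [hu8, ha8]
    decide
  obtain ⟨b, rfl⟩ := two_dvd_of_not_isUnit hb
  have hdvd : ((2 * j + 2 : ℕ) : ℤ_[2]) ∣ 2 * b := by
    rw [show 2 * j + 2 = 2 * (j + 1) by omega]
    push_cast
    exact_mod_cast two_mul_natCast_dvd (l := j + 1) (Nat.odd_iff.2 (by omega)) (dvd_mul_right 2 b)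
  obtain ⟨b', hb'⟩ := hdvd
  rw [hb']
  refine not_isSquare_mul_of_sqEquiv mod4 hE
    (sqEquiv_discFactor_small_of_even (even_two_mul j) b') ?_
  rw [map_mul, map_ofNat, hu4, mul_assoc, mod4_smallCofactor]
  exact not_isSquare_two_mul_of_isUnit
    ((by decide : IsUnit (3 : ZMod 4)).mul (isUnit_smallCofactor_two_mul_sq _ _))

end EvenDegree

theorem stmt_18 (n : ℕ) (hmod : n % 8 = 3 ∨ n % 8 = 4 ∨ n % 8 = 5 ∨
    n % 8 = 6 ∨ n % 8 = 7) (c : ℚ_[2]) :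
    ¬ ∃ y : ℚ_[2],
      algebraMap ℚ_[2] K y ^ 2 =
        disc ((H n + C c * H (n - 1)).map (algebraMap ℚ_[2] K)) := by
  obtain ⟨m, rfl⟩ := Nat.exists_eq_add_of_le' (show 1 ≤ n by omega)
  rintro ⟨y, hy⟩
  rw [Nat.add_sub_cancel, disc_map_eq_map_discr _ (by simp [natDegree_quasiHermite]),
    discr_quasiHermite m (w := c ^ 2 / 2) (by ring), ← map_pow] at hy
  have hsq : IsSquare ((hermiteRes (m + 1) : ℚ_[2]) * discFactor (m + 1) (c ^ 2 / 2)) :=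
    ⟨y, by rw [← sq, (algebraMap ℚ_[2] K).injective hy]⟩
  rcases hmod with h | h | h | h | h
  · exact not_isSquare_hermiteRes_mul_discFactor_of_mod_four_eq_three (by omega) c hsq
  · exact not_isSquare_hermiteRes_mul_discFactor_of_mod_eight_eq_four h c hsq
  · exact not_isSquare_hermiteRes_mul_discFactor_of_mod_eight_eq_five h c hsq
  · exact not_isSquare_hermiteRes_mul_discFactor_of_mod_eight_eq_six h c hsq
  · exact not_isSquare_hermiteRes_mul_discFactor_of_mod_four_eq_three (by omega) c hsq
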